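/- Let n_T ≥ 1 and let (g^k)_{k=1}^{n_T} and (λ_l)_{l=0}^{n_T−1} be nonnegative real sequences. Suppose λ ≥ 0 satisfies λ ≥ ∑_{l=0}^{n_T−1} λ_l and the step size satisfies τ ≤ (2λ(1+β))^{−1/β}. If a nonnegative sequence (v^k)_{k=0}^{n_T} satisfies, for all 1 ≤ k ≤ n_T, D^{(β)}_τ v^k ≤ ∑_{l=1}^{k} λ_{k−l}·v^l + g^k, then for all 1 ≤ k ≤ n_T, v^k ≤ 2·E_β(2λ·t_k^β)·( v^0 + max_{1≤m≤k} ∑_{j=1}^{m} P_{m−j}·g^j ). -/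

import Mathlib

open Finset

/-- Generalized binomial coefficient `C(α, j) = α(α−1)⋯(α−j+1)/j!`. -/
noncomputable def genBinom (α : ℝ) (j : ℕ) : ℝ :=
  (∏ i ∈ Finset.range j, (α - i)) / (Nat.factorial j)

/-- The coefficients `ϖ_j = (−1)^j C(β, j)` of `(1−z)^β`. -/
noncomputable def varpi (β : ℝ) (j : ℕ) : ℝ := (-1 : ℝ) ^ j * genBinom β j

/-- The coefficients `ϱ_j = (−1)^j C(−β, j)` of `(1−z)^{−β}`. -/
noncomputable def varrho (β : ℝ) (j : ℕ) : ℝ := (-1 : ℝ) ^ j * genBinom (-β) j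

/-- The Mittag-Leffler function `E_β(z) = ∑_{l=0}^∞ z^l / Γ(1 + lβ)`. -/
noncomputable def mittagLeffler (β z : ℝ) : ℝ :=
  ∑' l : ℕ, z ^ l / Real.Gamma (1 + (l : ℝ) * β)

theorem genBinom_eq_choose (α : ℝ) (j : ℕ) : genBinom α j = Ring.choose α j := by
  rw [Ring.choose_eq_smul, genBinom, ← Polynomial.aeval_eq_smeval, Polynomial.aeval_def,
    Polynomial.eval₂_eq_eval_map, descPochhammer_map, descPochhammer_eval_eq_prod_range]
  simp [div_eq_inv_mul]

theorem conv_eq_one (β : ℝ) :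
    (PowerSeries.mk (varrho β)) * (PowerSeries.mk (varpi β)) = 1 := by
  have h1 : ∀ a : ℝ, PowerSeries.mk (fun j => (-1 : ℝ) ^ j * genBinom a j)
      = PowerSeries.rescale (-1 : ℝ) (PowerSeries.binomialSeries ℝ a) := by
    intro a
    ext n
    simp [PowerSeries.coeff_rescale, genBinom_eq_choose]
  have h2 := h1 (-β)
  have h3 := h1 β
  change PowerSeries.mk (fun j => (-1 : ℝ) ^ j * genBinom (-β) j) *
    PowerSeries.mk (fun j => (-1 : ℝ) ^ j * genBinom β j) = 1
  rw [h2, h3, ← map_mul, ← PowerSeries.binomialSeries_add]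
  simp

theorem conv_inv (β : ℝ) (u : ℕ → ℝ) (k : ℕ) :
    ∑ j ∈ range (k + 1), varrho β (k - j) * ∑ i ∈ range (j + 1), varpi β (j - i) * u i = u k := by
  have h : PowerSeries.coeff k ((PowerSeries.mk u * PowerSeries.mk (varpi β)) *
     PowerSeries.mk (varrho β)) = u k := by
    rw [mul_assoc, mul_comm (PowerSeries.mk (varpi β)), conv_eq_one]; simp
  rw [PowerSeries.coeff_mul, Finset.Nat.sum_antidiagonal_eq_sum_range_succ_mk] at h
  rw [← h]
  apply sum_congr rfl
  intro j _
  simp only [PowerSeries.coeff_mk]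
  rw [PowerSeries.coeff_mul, Finset.Nat.sum_antidiagonal_eq_sum_range_succ_mk, mul_comm]
  simp [mul_comm]

theorem varrho_zero (β : ℝ) : varrho β 0 = 1 := by simp [varrho, genBinom]

theorem varrho_succ (β : ℝ) (m : ℕ) : varrho β (m + 1) = varrho β m * ((β + m) / (m + 1)) := by
  simp only [varrho, genBinom, prod_range_succ, pow_succ, Nat.factorial_succ]
  have : (m.factorial : ℝ) ≠ 0 := by positivity
  push_cast
  field_simp
  ring

theorem varrho_nonneg {β : ℝ} (hβ : 0 < β) (m : ℕ) : 0 ≤ varrho β m := by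
  induction m with
  | zero => simp [varrho_zero]
  | succ m ih => rw [varrho_succ]; positivity

theorem varrho_eq_Gamma {β : ℝ} (hβ : 0 < β) (m : ℕ) :
    varrho β m = Real.Gamma (m + β) / (Real.Gamma β * Real.Gamma (m + 1)) := by
  have hb := Real.Gamma_pos_of_pos hβ
  induction m with
  | zero => simp [varrho_zero, hb.ne']
  | succ m ih =>
    have h1 : (m : ℝ) + β ≠ 0 := by positivity
    have h2 : (m : ℝ) + 1 ≠ 0 := by positivity
    have h3 : Real.Gamma (m + 1) ≠ 0 := (Real.Gamma_pos_of_pos (by positivity)).ne'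
    rw [varrho_succ, ih]
    push_cast
    rw [show (m : ℝ) + 1 + β = (m + β) + 1 by ring, Real.Gamma_add_one h1, Real.Gamma_add_one h2]
    field_simp
    ring

theorem varrho_le {β : ℝ} (hβ : 0 < β) (hβ1 : β < 1) (m : ℕ) (hm : 1 ≤ m) :
    varrho β m ≤ (m : ℝ) ^ (β - 1) / Real.Gamma β := by
  have hb := Real.Gamma_pos_of_pos hβ
  have hm0 : (0 : ℝ) < m := by exact_mod_cast hm
  have hG := Real.Gamma_pos_of_pos hm0
  have h := Real.Gamma_mul_add_mul_le_rpow_Gamma_mul_rpow_Gamma (s := (m : ℝ)) (t := m + 1)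
    (a := 1 - β) (b := β) hm0 (by positivity) (by linarith) hβ (by ring)
  rw [show (1 - β) * (m : ℝ) + β * (m + 1) = m + β by ring, Real.Gamma_add_one hm0.ne',
    Real.mul_rpow hm0.le hG.le, mul_left_comm, ← Real.rpow_add hG] at h
  simp only [sub_add_cancel, Real.rpow_one] at h
  rw [varrho_eq_Gamma hβ, Real.Gamma_add_one hm0.ne', Real.rpow_sub_one hm0.ne']
  rw [div_div, div_le_div_iff₀ (by positivity) (by positivity)]
  calc _ ≤ ((m : ℝ) ^ β * Real.Gamma m) * (m * Real.Gamma β) := by gcongr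
    _ = _ := by ring

theorem ml_summable {β : ℝ} (hβ : 0 < β) (hβ1 : β < 1) {z : ℝ} (hz : 0 < z) :
    Summable (fun l : ℕ => z ^ l / Real.Gamma (1 + (l : ℝ) * β)) := by
  have hG : ∀ l : ℕ, 0 < Real.Gamma (1 + (l : ℝ) * β) := fun l => Real.Gamma_pos_of_pos (by positivity)
  have key : ∀ x : ℝ, 1 ≤ x → Real.Gamma x / Real.Gamma (x + β) ≤ 2 * x ^ (- β) := by
    intro x hx
    have hx0 : 0 < x := by linarith
    have hG' := Real.Gamma_pos_of_pos (show 0 < x + β by linarith)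
    have h := Real.Gamma_mul_add_mul_le_rpow_Gamma_mul_rpow_Gamma (s := x + β) (t := x + β + 1)
      (a := β) (b := 1 - β) (by linarith) (by linarith) hβ (by linarith) (by ring)
    rw [show β * (x + β) + (1 - β) * (x + β + 1) = x + 1 by ring, Real.Gamma_add_one hx0.ne',
      Real.Gamma_add_one (by linarith), Real.mul_rpow (by linarith) hG'.le, mul_left_comm,
      ← Real.rpow_add hG'] at h
    simp only [add_sub_cancel, Real.rpow_one] at h
    have h2 : (x + β) ^ (1 - β) ≤ 2 * x ^ (1 - β) := by
      calc (x + β) ^ (1 - β) ≤ (2 * x) ^ (1 - β) := by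
            apply Real.rpow_le_rpow <;> linarith
        _ = 2 ^ (1 - β) * x ^ (1 - β) := Real.mul_rpow (by norm_num) hx0.le
        _ ≤ 2 ^ (1 : ℝ) * x ^ (1 - β) := by
            gcongr
            · norm_num
            · linarith
        _ = _ := by norm_num
    rw [div_le_iff₀ hG']
    have h3 : x ^ (1 - β) = x * x ^ (-β) := by
      rw [sub_eq_add_neg, Real.rpow_add hx0, Real.rpow_one]
    rw [h3] at h2
    have h4 : x * Real.Gamma x ≤ x * (2 * x ^ (-β) * Real.Gamma (x + β)) := by
      calc _ ≤ _ := h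
        _ ≤ 2 * (x * x ^ (-β)) * Real.Gamma (x + β) := by gcongr
        _ = _ := by ring
    exact le_of_mul_le_mul_left h4 hx0
  refine summable_of_ratio_test_tendsto_lt_one (l := 0) (by norm_num)
    (Filter.Eventually.of_forall fun l => (div_pos (pow_pos hz l) (hG l)).ne') ?_
  have lim : Filter.Tendsto (fun l : ℕ => z * (2 * (1 + (l : ℝ) * β) ^ (-β))) Filter.atTop (nhds 0) := by
    have h1 : Filter.Tendsto (fun l : ℕ => 1 + (l : ℝ) * β) Filter.atTop Filter.atTop :=
      Filter.tendsto_atTop_add_const_left _ _ (tendsto_natCast_atTop_atTop.atTop_mul_const hβ)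
    have h2 := ((tendsto_rpow_neg_atTop hβ).comp h1).const_mul (z * 2)
    simpa [mul_assoc] using h2
  refine squeeze_zero (fun l => by positivity) (fun l => ?_) lim
  rw [Real.norm_of_nonneg (div_pos (pow_pos hz _) (hG _)).le,
    Real.norm_of_nonneg (div_pos (pow_pos hz _) (hG _)).le]
  have := key (1 + (l : ℝ) * β) (by nlinarith [(Nat.cast_nonneg l : (0 : ℝ) ≤ l)])
  have e : 1 + ((l + 1 : ℕ) : ℝ) * β = 1 + (l : ℝ) * β + β := by push_cast; ring
  calc _ = z * (Real.Gamma (1 + (l : ℝ) * β) / Real.Gamma (1 + (l : ℝ) * β + β)) := by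
        have h1 := (hG l).ne'
        have h2 := (hG (l + 1)).ne'
        rw [e] at h2 ⊢
        field_simp
        rw [pow_succ]
    _ ≤ _ := by gcongr

theorem beta_real {β c a : ℝ} (hβ : 0 < β) (hc : 0 ≤ c) (ha : 0 < a) :
    ∫ x in (0 : ℝ)..a, x ^ c * (a - x) ^ (β - 1)
      = a ^ (c + β) * (Real.Gamma (1 + c) * Real.Gamma β / Real.Gamma (1 + c + β)) := by
  have h := Complex.betaIntegral_scaled ((1 + c : ℝ) : ℂ) (β : ℂ) ha
  rw [Complex.betaIntegral_eq_Gamma_mul_div _ _ (by simp; linarith) (by simpa using hβ)] at h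
  rw [← Complex.ofReal_add, Complex.Gamma_ofReal, Complex.Gamma_ofReal, Complex.Gamma_ofReal] at h
  have e : ∫ x in (0 : ℝ)..a, (x : ℂ) ^ (((1 + c : ℝ) : ℂ) - 1) * ((a : ℂ) - x) ^ ((β : ℂ) - 1)
      = ((∫ x in (0 : ℝ)..a, x ^ c * (a - x) ^ (β - 1) : ℝ) : ℂ) := by
    rw [← intervalIntegral.integral_ofReal]
    apply intervalIntegral.integral_congr
    intro x hx
    rw [Set.uIcc_of_le ha.le] at hx
    simp only
    rw [Complex.ofReal_mul, Complex.ofReal_cpow hx.1, Complex.ofReal_cpow (by linarith [hx.2])]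
    push_cast
    congr 2
    ring
  rw [e] at h
  have e2 : (a : ℂ) ^ (((1 + c + β : ℝ) : ℂ) - 1) = ((a ^ (c + β) : ℝ) : ℂ) := by
    rw [Complex.ofReal_cpow ha.le]
    congr 1
    push_cast; ring
  rw [e2] at h
  exact_mod_cast h

theorem sum_le_beta {β c : ℝ} (hβ : 0 < β) (hβ1 : β < 1) (hc : 0 ≤ c) (k : ℕ) (hk : 1 ≤ k) :
    ∑ j ∈ Ico 1 k, ((j : ℝ) ^ c * ((k : ℝ) - j) ^ (β - 1)) ≤
      (k : ℝ) ^ (c + β) * (Real.Gamma (1 + c) * Real.Gamma β / Real.Gamma (1 + c + β)) := by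
  have hk0 : (0 : ℝ) < k := by exact_mod_cast hk
  have hk1 : (1 : ℝ) ≤ k := by exact_mod_cast hk
  rw [← beta_real hβ hc hk0]
  have hint : ∀ p q : ℝ, IntervalIntegrable (fun x : ℝ => x ^ c * ((k : ℝ) - x) ^ (β - 1))
      MeasureTheory.volume p q := by
    intro p q
    refine IntervalIntegrable.continuousOn_mul ?_
      ((Real.continuous_rpow_const hc).continuousOn)
    have := (intervalIntegral.intervalIntegrable_rpow' (a := k - p) (b := k - q) (r := β - 1)
      (by linarith)).comp_sub_left (k : ℝ)
    simpa using this
  have h1 : ∑ j ∈ Ico 1 k, ((j : ℝ) ^ c * ((k : ℝ) - j) ^ (β - 1)) ≤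
      ∫ x in ((1 : ℕ) : ℝ)..(k : ℝ), x ^ c * ((k : ℝ) - x) ^ (β - 1) := by
    refine sum_Ico_le_integral_of_le (f := fun j : ℝ => j ^ c * ((k : ℝ) - j) ^ (β - 1))
      hk ?_ ?_
    · intro i hi x hx
      have hi' := hi
      have hik : (i : ℝ) + 1 ≤ k := by exact_mod_cast hi'.2
      have hx1 := hx.1
      have hx2 := hx.2
      push_cast at hx2
      have : (0:ℝ) ≤ i := by positivity
      apply mul_le_mul
      · exact Real.rpow_le_rpow this hx1 hc
      · apply Real.rpow_le_rpow_of_nonpos <;> linarith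
      · apply Real.rpow_nonneg; linarith
      · apply Real.rpow_nonneg; linarith
    · have := hint 1 k
      rw [intervalIntegrable_iff_integrableOn_Ico_of_le hk1] at this
      exact_mod_cast this
  refine h1.trans ?_
  apply intervalIntegral.integral_mono_interval (by simp) (by exact_mod_cast hk1) le_rfl _ (hint _ _)
  rw [Filter.EventuallyLE, MeasureTheory.ae_restrict_iff' measurableSet_Ioc]
  refine Filter.Eventually.of_forall fun x hx => ?_
  have := hx.1
  have := hx.2
  simp only [Pi.zero_apply]
  apply mul_nonneg <;> apply Real.rpow_nonneg <;> linarith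

theorem varrho_sum_le {β c : ℝ} (hβ : 0 < β) (hβ1 : β < 1) (hc : 0 ≤ c) (k : ℕ) (hk : 1 ≤ k) :
    ∑ j ∈ Ico 1 k, varrho β (k - j) * ((j : ℝ) ^ c / Real.Gamma (1 + c)) ≤
      (k : ℝ) ^ (c + β) / Real.Gamma (1 + c + β) := by
  have hb := Real.Gamma_pos_of_pos hβ
  have hb1 := Real.Gamma_pos_of_pos (show 0 < 1 + c by linarith)
  have hb2 := Real.Gamma_pos_of_pos (show 0 < 1 + c + β by linarith)
  calc _ ≤ ∑ j ∈ Ico 1 k, ((j : ℝ) ^ c * ((k : ℝ) - j) ^ (β - 1)) / (Real.Gamma (1 + c) * Real.Gamma β) := by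
        apply sum_le_sum
        intro j hj
        have hj' := Finset.mem_Ico.1 hj
        have := varrho_le hβ hβ1 (k - j) (by omega)
        rw [Nat.cast_sub hj'.2.le] at this
        calc _ ≤ ((k : ℝ) - j) ^ (β - 1) / Real.Gamma β * ((j : ℝ) ^ c / Real.Gamma (1 + c)) := by
              gcongr
          _ = _ := by field_simp
    _ ≤ (k : ℝ) ^ (c + β) * (Real.Gamma (1 + c) * Real.Gamma β / Real.Gamma (1 + c + β)) / (Real.Gamma (1 + c) * Real.Gamma β) := by
        rw [← sum_div]
        gcongr
        exact sum_le_beta hβ hβ1 hc k hk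
    _ = _ := by field_simp

theorem ml_term {β lambda τ : ℝ} (hlam : 0 ≤ lambda) (hτ : 0 ≤ τ) (k l : ℕ) :
    (2 * lambda * ((k : ℝ) * τ) ^ β) ^ l / Real.Gamma (1 + (l : ℝ) * β) =
      (2 * lambda * τ ^ β) ^ l * ((k : ℝ) ^ ((l : ℝ) * β) / Real.Gamma (1 + (l : ℝ) * β)) := by
  have hk : (0 : ℝ) ≤ k := Nat.cast_nonneg k
  rw [Real.mul_rpow hk hτ, mul_comm (l : ℝ) β, Real.rpow_mul hk, Real.rpow_natCast,
    show 2 * lambda * ((k : ℝ) ^ β * τ ^ β) = (2 * lambda * τ ^ β) * (k : ℝ) ^ β by ring,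
    mul_pow, mul_div_assoc]

theorem ml_nonneg {β lambda τ : ℝ} (hβ : 0 < β) (hlam : 0 ≤ lambda) (hτ : 0 ≤ τ) (k : ℕ) :
    0 ≤ mittagLeffler β (2 * lambda * ((k : ℝ) * τ) ^ β) := by
  apply tsum_nonneg
  intro l
  have := Real.Gamma_pos_of_pos (show 0 < 1 + (l : ℝ) * β by positivity)
  positivity

theorem ml_mono {β lambda τ : ℝ} (hβ : 0 < β) (hβ1 : β < 1) (hlam : 0 < lambda) (hτ : 0 < τ)
    {i j : ℕ} (hi : 1 ≤ i) (hij : i ≤ j) :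
    mittagLeffler β (2 * lambda * ((i : ℝ) * τ) ^ β) ≤
      mittagLeffler β (2 * lambda * ((j : ℝ) * τ) ^ β) := by
  have hi0 : (0 : ℝ) < i := by exact_mod_cast hi
  have hij' : (i : ℝ) ≤ j := by exact_mod_cast hij
  have hj0 : (0 : ℝ) < j := by linarith
  apply Summable.tsum_le_tsum _ (ml_summable hβ hβ1 (by positivity))
    (ml_summable hβ hβ1 (by positivity))
  intro l
  have := Real.Gamma_pos_of_pos (show 0 < 1 + (l : ℝ) * β by positivity)
  gcongr

theorem ml_step {β lambda τ : ℝ} (hβ : 0 < β) (hβ1 : β < 1) (hlam : 0 < lambda) (hτ : 0 < τ)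
    {k : ℕ} (hk : 1 ≤ k) :
    2 * lambda * τ ^ β * ∑ j ∈ Finset.Ico 1 k, varrho β (k - j) *
      mittagLeffler β (2 * lambda * ((j : ℝ) * τ) ^ β) ≤
    mittagLeffler β (2 * lambda * ((k : ℝ) * τ) ^ β) - 1 := by
  have hk0 : (0 : ℝ) < k := by exact_mod_cast hk
  set q := 2 * lambda * τ ^ β with hq
  have hq0 : 0 < q := by positivity
  have hs : ∀ j : ℕ, 1 ≤ j → Summable (fun l : ℕ =>
      q ^ l * ((j : ℝ) ^ ((l : ℝ) * β) / Real.Gamma (1 + (l : ℝ) * β))) := by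
    intro j hj
    have hj0 : (0 : ℝ) < j := by exact_mod_cast hj
    have := ml_summable hβ hβ1 (show 0 < 2 * lambda * ((j : ℝ) * τ) ^ β by positivity)
    simpa only [ml_term hlam.le hτ.le, ← hq] using this
  have hE : ∀ j : ℕ, mittagLeffler β (2 * lambda * ((j : ℝ) * τ) ^ β) =
      ∑' l : ℕ, q ^ l * ((j : ℝ) ^ ((l : ℝ) * β) / Real.Gamma (1 + (l : ℝ) * β)) := by
    intro j
    simp only [mittagLeffler, ml_term hlam.le hτ.le, ← hq]
  simp only [hE]
  have hsum : HasSum (fun l : ℕ => ∑ j ∈ Finset.Ico 1 k, varrho β (k - j) *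
        (q ^ l * ((j : ℝ) ^ ((l : ℝ) * β) / Real.Gamma (1 + (l : ℝ) * β))))
      (∑ j ∈ Finset.Ico 1 k, varrho β (k - j) *
        ∑' l : ℕ, q ^ l * ((j : ℝ) ^ ((l : ℝ) * β) / Real.Gamma (1 + (l : ℝ) * β))) := by
    apply hasSum_sum
    intro j hj
    exact (hs j (Finset.mem_Ico.1 hj).1).hasSum.mul_left _
  have hsum2 := hsum.mul_left q
  have hk' := hs k hk
  rw [hk'.tsum_eq_zero_add]
  have hk2 := (summable_nat_add_iff 1).2 hk'
  simp only [pow_zero, Nat.cast_zero, zero_mul, Real.rpow_zero, add_zero, Real.Gamma_one, div_one,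
    mul_one, add_sub_cancel_left]
  refine hasSum_le (fun l => ?_) hsum2 hk2.hasSum
  have h := varrho_sum_le hβ hβ1 (c := (l : ℝ) * β) (by positivity) k hk
  have e : ((l + 1 : ℕ) : ℝ) * β = (l : ℝ) * β + β := by push_cast; ring
  rw [e, ← add_assoc]
  calc _ = q ^ (l + 1) * ∑ j ∈ Finset.Ico 1 k, varrho β (k - j) *
        ((j : ℝ) ^ ((l : ℝ) * β) / Real.Gamma (1 + (l : ℝ) * β)) := by
        rw [Finset.mul_sum, Finset.mul_sum]
        apply Finset.sum_congr rfl
        intro j _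
        ring
    _ ≤ _ := by gcongr

/-- Discrete fractional Grönwall inequality, first-power version. -/
theorem discrete_fractional_gronwall_linear (β τ : ℝ) (hβ0 : 0 < β) (hβ1 : β < 1)
    (hτ : 0 < τ)
    (nT : ℕ) (hnT : 1 ≤ nT)
    (g v lam : ℕ → ℝ) (lambda : ℝ)
    (hg : ∀ k, 1 ≤ k → k ≤ nT → 0 ≤ g k) (hlam : ∀ l < nT, 0 ≤ lam l)
    (hlambda : 0 ≤ lambda)
    (hsum : ∑ l ∈ Finset.range nT, lam l ≤ lambda)
    (hstep : τ ≤ (2 * lambda * (1 + β)) ^ (-(1 / β)))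
    (hv : ∀ k ≤ nT, 0 ≤ v k)
    (hineq : ∀ k : ℕ, 1 ≤ k → k ≤ nT →
      τ ^ (-β) * ∑ j ∈ Finset.range (k + 1), varpi β (k - j) * (v j - v 0)
        ≤ (∑ l ∈ Finset.Icc 1 k, lam (k - l) * v l) + g k) :
    ∀ k : ℕ, ∀ hk : 1 ≤ k, k ≤ nT →
      v k ≤ 2 * mittagLeffler β (2 * lambda * ((k : ℝ) * τ) ^ β) *
        (v 0 + (Finset.Icc 1 k).sup' (Finset.nonempty_Icc.mpr hk)
          (fun m => ∑ j ∈ Finset.Icc 1 m, τ ^ β * varrho β (m - j) * g j)) := by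
  have hlam0 : 0 < lambda := by
    rcases hlambda.eq_or_lt with h | h
    · exfalso
      rw [← h] at hstep
      rw [mul_zero, zero_mul, Real.zero_rpow (by simp [hβ0.ne'])] at hstep
      linarith
    · exact h
  have hτβ : 0 < τ ^ β := Real.rpow_pos_of_pos hτ β
  have hhalf : τ ^ β * lambda ≤ 1 / 2 := by
    have hb : 0 < 2 * lambda * (1 + β) := by positivity
    have h1 : τ ^ β ≤ (2 * lambda * (1 + β))⁻¹ := by
      calc τ ^ β ≤ ((2 * lambda * (1 + β)) ^ (-(1 / β))) ^ β := Real.rpow_le_rpow hτ.le hstep hβ0.le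
        _ = (2 * lambda * (1 + β))⁻¹ := by
          rw [← Real.rpow_mul hb.le, show -(1 / β) * β = -1 by field_simp, Real.rpow_neg_one]
    calc τ ^ β * lambda ≤ (2 * lambda * (1 + β))⁻¹ * lambda := by gcongr
      _ = (2 * (1 + β))⁻¹ := by field_simp
      _ ≤ 2⁻¹ := by
        apply inv_anti₀ <;> linarith
      _ = 1 / 2 := by norm_num
  intro n hn hnn
  set S := (Finset.Icc 1 n).sup' (Finset.nonempty_Icc.mpr hn)
          (fun m => ∑ j ∈ Finset.Icc 1 m, τ ^ β * varrho β (m - j) * g j) with hS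
  have hSle : ∀ m, 1 ≤ m → m ≤ n → ∑ j ∈ Finset.Icc 1 m, τ ^ β * varrho β (m - j) * g j ≤ S := by
    intro m h1 h2
    exact Finset.le_sup' (fun m => ∑ j ∈ Finset.Icc 1 m, τ ^ β * varrho β (m - j) * g j)
      (Finset.mem_Icc.2 ⟨h1, h2⟩)
  have hS0 : 0 ≤ S := by
    refine le_trans (Finset.sum_nonneg fun j hj => ?_) (hSle 1 le_rfl hn)
    have hj' := Finset.mem_Icc.1 hj
    have := hg j hj'.1 (by omega)
    have := varrho_nonneg hβ0 (1 - j)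
    positivity
  have hG0 : 0 ≤ v 0 + S := add_nonneg (hv 0 (by omega)) hS0
  have hL : ∀ j, j ≤ nT → ∀ M : ℝ, 0 ≤ M → (∀ l, 1 ≤ l → l ≤ j → v l ≤ M) →
      ∑ l ∈ Finset.Icc 1 j, lam (j - l) * v l ≤ lambda * M := by
    intro j hj M hM h
    have e : ∑ l ∈ Finset.Icc 1 j, lam (j - l) = ∑ i ∈ Finset.range j, lam i := by
      refine Finset.sum_nbij' (fun l => j - l) (fun i => j - i) ?_ ?_ ?_ ?_ ?_ <;>
        intro a ha <;> simp only [Finset.mem_Icc, Finset.mem_range] at ha ⊢ <;> omega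
    calc ∑ l ∈ Finset.Icc 1 j, lam (j - l) * v l ≤ ∑ l ∈ Finset.Icc 1 j, lam (j - l) * M := by
          apply Finset.sum_le_sum
          intro l hl
          have hl' := Finset.mem_Icc.1 hl
          exact mul_le_mul_of_nonneg_left (h l hl'.1 hl'.2) (hlam _ (by omega))
      _ = (∑ i ∈ Finset.range j, lam i) * M := by rw [← Finset.sum_mul, e]
      _ ≤ (∑ i ∈ Finset.range nT, lam i) * M := by
          apply mul_le_mul_of_nonneg_right _ hM
          apply Finset.sum_le_sum_of_subset_of_nonneg
          · intro i hi
            simp only [Finset.mem_range] at hi ⊢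
            omega
          · intro i hi _
            exact hlam i (Finset.mem_range.1 hi)
      _ ≤ lambda * M := mul_le_mul_of_nonneg_right hsum hM
  have main : ∀ k : ℕ, 1 ≤ k → k ≤ n →
      v k ≤ 2 * mittagLeffler β (2 * lambda * ((k : ℝ) * τ) ^ β) * (v 0 + S) := by
    intro k
    induction k using Nat.strong_induction_on with
    | _ k ih =>
    intro hk1 hkn
    by_contra! hcon
    have hE0 : ∀ j : ℕ, 1 ≤ j → 0 ≤ 2 * mittagLeffler β (2 * lambda * ((j : ℝ) * τ) ^ β) * (v 0 + S) :=
      fun j hj => mul_nonneg (mul_nonneg (by norm_num) (ml_nonneg hβ0 hlambda hτ.le j)) hG0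
    have hmono : ∀ i j : ℕ, 1 ≤ i → i ≤ j →
        2 * mittagLeffler β (2 * lambda * ((i : ℝ) * τ) ^ β) * (v 0 + S) ≤
        2 * mittagLeffler β (2 * lambda * ((j : ℝ) * τ) ^ β) * (v 0 + S) := by
      intro i j h1 h2
      have := ml_mono hβ0 hβ1 hlam0 hτ h1 h2
      gcongr
    -- the convolved inequality
    have hA : v k - v 0 ≤ ∑ j ∈ Finset.Icc 1 k, τ ^ β * varrho β (k - j) *
        ((∑ l ∈ Finset.Icc 1 j, lam (j - l) * v l) + g j) := by
      have h := conv_inv β (fun i => v i - v 0) k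
      rw [← h, Finset.range_eq_Ico, Finset.sum_eq_sum_Ico_succ_bot (by omega)]
      simp only [zero_add, Finset.sum_range_one, sub_self, mul_zero]
      rw [show Finset.Ico 1 (k + 1) = Finset.Icc 1 k by ext; simp]
      apply Finset.sum_le_sum
      intro j hj
      have hj' := Finset.mem_Icc.1 hj
      have h2 := hineq j hj'.1 (by omega)
      have h3 := varrho_nonneg hβ0 (k - j)
      have h4 : τ ^ β * τ ^ (-β) = 1 := by rw [← Real.rpow_add hτ]; simp
      calc _ = (τ ^ β * varrho β (k - j)) * (τ ^ (-β) *
              ∑ i ∈ Finset.range (j + 1), varpi β (j - i) * (v i - v 0)) := by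
            linear_combination (-(varrho β (k - j) *
              ∑ i ∈ Finset.range (j + 1), varpi β (j - i) * (v i - v 0))) * h4
        _ ≤ _ := mul_le_mul_of_nonneg_left h2 (by positivity)
    simp only [mul_add, Finset.sum_add_distrib] at hA
    have hB := hSle k hk1 hkn
    rw [← Finset.sum_Ico_add_eq_sum_Icc hk1 (f := fun j => τ ^ β * varrho β (k - j) *
      ∑ l ∈ Finset.Icc 1 j, lam (j - l) * v l)] at hA
    have hvk0 : 0 ≤ v k := hv k (by omega)
    have hC : τ ^ β * varrho β (k - k) * ∑ l ∈ Finset.Icc 1 k, lam (k - l) * v l ≤ 1 / 2 * v k := by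
      rw [Nat.sub_self, varrho_zero, mul_one]
      have h1 := hL k (by omega) (v k) hvk0 (by
        intro l hl1 hl2
        rcases hl2.eq_or_lt with h | h
        · rw [h]
        · exact ((ih l h hl1 (by omega)).trans (hmono l k hl1 hl2)).trans hcon.le)
      calc _ ≤ τ ^ β * (lambda * v k) := by gcongr
        _ = (τ ^ β * lambda) * v k := by ring
        _ ≤ _ := by gcongr
    have hD : ∑ j ∈ Finset.Ico 1 k, τ ^ β * varrho β (k - j) *
        (∑ l ∈ Finset.Icc 1 j, lam (j - l) * v l) ≤
        (mittagLeffler β (2 * lambda * ((k : ℝ) * τ) ^ β) - 1) * (v 0 + S) := by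
      calc _ ≤ ∑ j ∈ Finset.Ico 1 k, τ ^ β * varrho β (k - j) *
          (lambda * (2 * mittagLeffler β (2 * lambda * ((j : ℝ) * τ) ^ β) * (v 0 + S))) := by
            apply Finset.sum_le_sum
            intro j hj
            have hj' := Finset.mem_Ico.1 hj
            have h3 := varrho_nonneg hβ0 (k - j)
            apply mul_le_mul_of_nonneg_left _ (by positivity)
            apply hL j (by omega) _ (hE0 j hj'.1)
            intro l h1 h2
            exact (ih l (by omega) h1 (by omega)).trans (hmono l j h1 h2)
        _ = (2 * lambda * τ ^ β * ∑ j ∈ Finset.Ico 1 k, varrho β (k - j) *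
            mittagLeffler β (2 * lambda * ((j : ℝ) * τ) ^ β)) * (v 0 + S) := by
            rw [Finset.mul_sum, Finset.sum_mul]
            apply Finset.sum_congr rfl
            intro j _
            ring
        _ ≤ _ := mul_le_mul_of_nonneg_right (ml_step hβ0 hβ1 hlam0 hτ hk1) hG0
    linarith
  exact main n hn le_rfl
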